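/- Let (V, w) be a Whittaker module over R(f) with Z_V ≠ 0, say Z_V = ⟨g⟩ with g = ∏_{i=1}^m g_i^{n_i} a factorization into powers of distinct irreducible polynomials. Then V decomposes as a direct sum V = V_1 ⊕ ⋯ ⊕ V_m of indecomposable submodules, where V_i = R·(∏_{j≠i} g_j^{n_j})·w. -/

import Mathlib

/-!
The decomposition comes from the Chinese remainder theorem for polynomials in the central Casimir
element `Ω`: the product `∏ gᵢ ^ nᵢ`, evaluated at `Ω`, kills `V`, and its factors are pairwise
coprime.

Indecomposability rests on Kostant's description of Whittaker vectors
(`IsSmith.whittaker_vector`): in the module generated by a Whittaker vector `w`, every Whittaker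
vector is `p(Ω) w` for some `p`. On `w` one has `2cF = Ω - u(H + 1)`, so every vector has the form
`P(Ω, H) w` with `P` a polynomial (`IsSmith.exists_eval₂`). Moving `E` past `H` translates
`H ↦ H - 1`, so `P(Ω, H) w` is a Whittaker vector iff the difference `P(Ω, H - 1) - P(Ω, H)` kills
`w`. Differencing lowers the degree in `H` and multiplies the leading coefficient by a nonzero
integer, hence the coefficients of positive degree in `H` all kill `w`
(`coeff_mem_of_shift_invariant`). No freeness of `V` or of `R(f)` over `ℂ[Ω]` is needed.

If `V_i = W₁ ⊕ W₂` with generator `wᵢ = w₁ + w₂`, both `w_k` are Whittaker vectors, so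
`w_k = p_k(Ω) wᵢ`. As `gᵢ ^ nᵢ` kills `wᵢ`, a `p_k` not divisible by `gᵢ` acts invertibly, and then
`W_k = V_i`; if both are divisible, the polynomial `p₁ + p₂ - 1` is prime to `gᵢ` and kills `wᵢ`, so
`V_i = 0`.
-/

open Polynomial

inductive SmithGen : Type
  | E | F | H

open SmithGen in
inductive SmithRel (f : ℂ[X]) : FreeAlgebra ℂ SmithGen → FreeAlgebra ℂ SmithGen → Prop
  | ef : SmithRel f (FreeAlgebra.ι ℂ E * FreeAlgebra.ι ℂ F - FreeAlgebra.ι ℂ F * FreeAlgebra.ι ℂ E)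
      (aeval (FreeAlgebra.ι ℂ H) f)
  | he : SmithRel f (FreeAlgebra.ι ℂ H * FreeAlgebra.ι ℂ E - FreeAlgebra.ι ℂ E * FreeAlgebra.ι ℂ H)
      (FreeAlgebra.ι ℂ E)
  | hf : SmithRel f (FreeAlgebra.ι ℂ H * FreeAlgebra.ι ℂ F - FreeAlgebra.ι ℂ F * FreeAlgebra.ι ℂ H)
      (-FreeAlgebra.ι ℂ F)

/-- Smith's algebra `R(f)`, similar to `U(sl₂)`. -/
abbrev SmithAlgebra (f : ℂ[X]) : Type := RingQuot (SmithRel f)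

noncomputable def SmithE (f : ℂ[X]) : SmithAlgebra f :=
  RingQuot.mkAlgHom ℂ (SmithRel f) (FreeAlgebra.ι ℂ SmithGen.E)

noncomputable def SmithF (f : ℂ[X]) : SmithAlgebra f :=
  RingQuot.mkAlgHom ℂ (SmithRel f) (FreeAlgebra.ι ℂ SmithGen.F)

noncomputable def SmithH (f : ℂ[X]) : SmithAlgebra f :=
  RingQuot.mkAlgHom ℂ (SmithRel f) (FreeAlgebra.ι ℂ SmithGen.H)

/-- The Casimir element `Ω = 2FE + u(H+1)`. -/
noncomputable def SmithOmega (f u : ℂ[X]) : SmithAlgebra f :=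
  2 * SmithF f * SmithE f + aeval (SmithH f) (u.comp (X + 1))

/-! ### Translations and differences of polynomials -/

/-- An element `y` with `y x = (x + s) y`, commuting with the coefficients, moves past a
polynomial in `x` by translating the variable. -/
theorem mul_eval₂_shift {S A : Type*} [CommRing S] [Ring A] (φ : S →+* A) (x y : A) (s : S)
    (hx : ∀ a, Commute (φ a) x) (hy : ∀ a, Commute (φ a) y) (h : y * x = (x + φ s) * y)
    (P : S[X]) :
    y * eval₂RingHom' φ x hx P = eval₂RingHom' φ x hx (P.comp (X + C s)) * y := by
  induction P using Polynomial.induction_on with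
  | C a => simpa [eval₂RingHom'] using (hy a).eq.symm
  | add p q hp hq => rw [map_add, mul_add, hp, hq, add_comp, map_add, add_mul]
  | monomial k a ih =>
    have e : eval₂RingHom' φ x hx (X + C s) = x + φ s := by
      rw [map_add]; simp [eval₂RingHom']
    have e' : eval₂RingHom' φ x hx X = x := by simp [eval₂RingHom']
    rw [pow_succ, ← mul_assoc, map_mul, ← mul_assoc, ih, mul_assoc _ y, e', h, mul_X_comp, map_mul, e,
      mul_assoc]

theorem diff_natDegree_le {S : Type*} [CommRing S] (s : S) (N : ℕ) (P : S[X])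
    (hP : P.natDegree ≤ N + 1) : (P.comp (X + C s) - P).natDegree ≤ N := by
  rw [natDegree_le_iff_coeff_eq_zero]
  intro k hk
  rw [coeff_sub, ← taylor_apply, taylor_coeff]
  rcases Nat.lt_or_ge (N + 1) k with h | h
  · rw [hasseDeriv_eq_zero_of_lt_natDegree _ _ (by omega),
      coeff_eq_zero_of_natDegree_lt (by omega)]
    simp
  · obtain rfl : k = N + 1 := by omega
    have : (hasseDeriv (N + 1) P).natDegree < 1 := by
      have := natDegree_hasseDeriv_le P (N + 1); omega
    rw [eval_eq_sum_range' this]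
    simp [hasseDeriv_coeff]

theorem diff_coeff {S : Type*} [CommRing S] (s : S) (N : ℕ) (P : S[X])
    (hP : P.natDegree ≤ N + 1) :
    (P.comp (X + C s) - P).coeff N = (N + 1) * s * P.coeff (N + 1) := by
  rw [coeff_sub, ← taylor_apply, taylor_coeff]
  have : (hasseDeriv N P).natDegree < 2 := by
    have := natDegree_hasseDeriv_le P N; omega
  rw [eval_eq_sum_range' this]
  simp [hasseDeriv_coeff, Finset.sum_range_succ, add_comm 1 N]
  ring

/-- Let `J` be an ideal of `S[X]` stable under a translation `X ↦ X + s`, `s` a unit. If `P` is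
invariant under the translation modulo `J`, then all nonconstant coefficients of `P` lie in `J`:
differencing lowers the degree and multiplies the leading coefficient by a unit. -/
theorem coeff_mem_of_shift_invariant {S : Type*} [CommRing S] [Algebra ℚ S] (s : S)
    (hs : IsUnit s) (J : Ideal S[X]) (hJ : ∀ Q ∈ J, Q.comp (X + C s) ∈ J) (N : ℕ) :
    ∀ P : S[X], P.natDegree ≤ N → P.comp (X + C s) - P ∈ J →
      ∀ k, 1 ≤ k → C (P.coeff k) ∈ J := by
  induction N with
  | zero =>
    intro P hP _ k hk
    rw [coeff_eq_zero_of_natDegree_lt (by omega)]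
    simp
  | succ N ih =>
    intro P hP hD
    have hDdeg := diff_natDegree_le s N P hP
    have hDN := diff_coeff s N P hP
    generalize hDdef : P.comp (X + C s) - P = D at hD hDdeg hDN
    have hDk := ih D hDdeg (J.sub_mem (hJ D hD) hD)
    have hD0 : C (D.coeff 0) ∈ J := by
      have e : D = C (D.coeff 0) + D.divX * X := by rw [add_comm]; exact (divX_mul_X_add D).symm
      have h2 : D.divX * X ∈ J := by
        rw [as_sum_range_C_mul_X_pow D.divX, Finset.sum_mul]
        refine J.sum_mem fun i _ => ?_
        rw [coeff_divX, mul_assoc]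
        exact J.mul_mem_right _ (hDk _ (by omega))
      have : C (D.coeff 0) = D - D.divX * X := by
        linear_combination -e
      rw [this]
      exact J.sub_mem hD h2
    have hlead : C (P.coeff (N + 1)) ∈ J := by
      have hDall : C (D.coeff N) ∈ J := by
        rcases Nat.eq_zero_or_pos N with h | h
        · rw [h]; exact hD0
        · exact hDk N h
      obtain ⟨t, ht⟩ := hs.exists_left_inv
      have hinv : algebraMap ℚ S (1 / (N + 1)) * ((N : S) + 1) = 1 := by
        have : ((N : S) + 1) = algebraMap ℚ S (N + 1) := by simp
        rw [this, ← map_mul, one_div, inv_mul_cancel₀ (by positivity), map_one]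
      have : C (P.coeff (N + 1)) = C (algebraMap ℚ S (1 / (N + 1)) * t) * C (D.coeff N) := by
        rw [← C_mul, hDN]
        congr 1
        linear_combination (-P.coeff (N + 1)) * ht - (t * s * P.coeff (N + 1)) * hinv
      rw [this]
      exact J.mul_mem_left _ hDall
    intro k hk
    rcases lt_trichotomy k (N + 1) with h | rfl | h
    ·
      -- remove the leading term, which lies in `J`
      set L : S[X] := C (P.coeff (N + 1)) * X ^ (N + 1) with hL
      have hLJ : L ∈ J := J.mul_mem_right _ hlead
      have hdeg : (P - L).natDegree ≤ N := by
        rw [natDegree_le_iff_coeff_eq_zero]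
        intro j hj
        rw [coeff_sub, hL, coeff_C_mul_X_pow]
        rcases eq_or_ne j (N + 1) with rfl | hne
        · simp
        · rw [if_neg hne, coeff_eq_zero_of_natDegree_lt (by omega), sub_zero]
      have hmem : (P - L).comp (X + C s) - (P - L) ∈ J := by
        have : (P - L).comp (X + C s) - (P - L) = D - (L.comp (X + C s) - L) := by
          rw [sub_comp, ← hDdef]; ring
        rw [this]
        exact J.sub_mem hD (J.sub_mem (hJ L hLJ) hLJ)
      have := ih (P - L) hdeg hmem k hk
      rwa [coeff_sub, hL, coeff_C_mul_X_pow, if_neg h.ne, sub_zero] at this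
    · exact hlead
    · rw [coeff_eq_zero_of_natDegree_lt (by omega)]
      simp

/-! ### The relations of `R(f)` -/

section Relations

variable (f : ℂ[X])

theorem smith_ef : SmithE f * SmithF f - SmithF f * SmithE f = aeval (SmithH f) f := by
  have := RingQuot.mkAlgHom_rel ℂ (SmithRel.ef (f := f))
  simpa [SmithE, SmithF, SmithH, aeval_algHom_apply] using this

theorem smith_he : SmithH f * SmithE f - SmithE f * SmithH f = SmithE f := by
  have := RingQuot.mkAlgHom_rel ℂ (SmithRel.he (f := f))
  simpa [SmithE, SmithF, SmithH] using this

theorem smith_hf : SmithH f * SmithF f - SmithF f * SmithH f = -SmithF f := by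
  have := RingQuot.mkAlgHom_rel ℂ (SmithRel.hf (f := f))
  simpa [SmithE, SmithF, SmithH] using this

theorem smith_adjoin : Algebra.adjoin ℂ {SmithE f, SmithF f, SmithH f} = ⊤ := by
  rw [eq_top_iff]
  rintro x -
  obtain ⟨x, rfl⟩ := RingQuot.mkAlgHom_surjective ℂ (SmithRel f) x
  induction x using FreeAlgebra.induction with
  | grade0 a => rw [AlgHom.commutes]; exact Subalgebra.algebraMap_mem _ a
  | grade1 i => cases i <;> exact Algebra.subset_adjoin (by simp [SmithE, SmithF, SmithH])
  | mul a b ha hb => rw [map_mul]; exact mul_mem ha hb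
  | add a b ha hb => rw [map_add]; exact add_mem ha hb

end Relations

/-- A `ℂ`-algebra generated by elements `E`, `F`, `H` satisfying the relations of `R(f)`, where
`f = (u(X + 1) - u) / 2`. Only these relations are needed below, so the arguments are made for any
quotient of `R(f)`. -/
structure IsSmith {A : Type*} [Ring A] [Algebra ℂ A] (u : ℂ[X]) (E F H : A) : Prop where
  ef : 2 * (E * F - F * E) = aeval H (u.comp (X + 1)) - aeval H u
  he : H * E - E * H = E
  hf : H * F - F * H = -F
  gen : Algebra.adjoin ℂ {E, F, H} = ⊤

namespace IsSmith

variable {A : Type*} [Ring A] [Algebra ℂ A] {u : ℂ[X]} {E F H : A}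

theorem E_aeval (h : IsSmith u E F H) (p : ℂ[X]) :
    E * aeval H p = aeval H (p.comp (X - 1)) * E := by
  have := mul_eval₂_shift (algebraMap ℂ A) H E (-1)
    (fun a => Algebra.commutes a _) (fun a => Algebra.commutes a _)
    (by rw [map_neg, map_one, add_mul, neg_one_mul, ← sub_eq_add_neg, eq_sub_iff_add_eq,
          ← eq_sub_iff_add_eq']
        exact h.he.symm) p
  rw [C_neg, C_1, ← sub_eq_add_neg] at this
  exact this

theorem F_aeval (h : IsSmith u E F H) (p : ℂ[X]) :
    F * aeval H p = aeval H (p.comp (X + 1)) * F := by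
  have := mul_eval₂_shift (algebraMap ℂ A) H F 1
    (fun a => Algebra.commutes a _) (fun a => Algebra.commutes a _)
    (by rw [map_one, add_mul, one_mul, sub_eq_iff_eq_add.1 h.hf]; abel) p
  rw [C_1] at this
  exact this

/-- The Casimir element is central. -/
theorem commute_omega (h : IsSmith u E F H) (r : A) :
    Commute (2 * F * E + aeval H (u.comp (X + 1))) r := by
  have hE := h.E_aeval (u.comp (X + 1))
  have hF := h.F_aeval u
  rw [comp_assoc] at hE
  simp only [add_comp, X_comp, one_comp, sub_add_cancel, comp_X] at hE
  have hef := h.ef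
  have he := h.he
  have hf := h.hf
  have hr : r ∈ Algebra.adjoin ℂ {E, F, H} := h.gen ▸ Algebra.mem_top
  induction hr using Algebra.adjoin_induction with
  | mem x hx =>
    rw [commute_iff_eq]
    rcases hx with rfl | rfl | rfl
    · have : x * (2 * F * x) = 2 * F * x * x + (2 * (x * F - F * x)) * x := by noncomm_ring
      rw [mul_add, hE, this, hef]
      noncomm_ring
    · have : 2 * x * E * x = x * (2 * x * E) + x * (2 * (E * x - x * E)) := by noncomm_ring
      rw [add_mul, ← hF, this, hef]
      noncomm_ring
    · have h1 : x * aeval x (u.comp (X + 1)) = aeval x (u.comp (X + 1)) * x := by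
        have := congrArg (aeval x) (mul_comm X (u.comp (X + 1)))
        simpa only [map_mul, aeval_X] using this
      have h2 : x * (2 * F * E) - 2 * F * E * x
          = 2 * ((x * F - F * x) * E + F * (x * E - E * x)) := by noncomm_ring
      rw [he, hf, neg_mul, neg_add_cancel, mul_zero, sub_eq_zero] at h2
      rw [mul_add, add_mul, h1, h2]
  | algebraMap a => exact (Algebra.commutes a _).symm
  | add x y _ _ hx hy => exact hx.add_right hy
  | mul x y _ _ hx hy => exact hx.mul_right hy

/-- Polynomials in the Casimir element are central. -/
theorem commute_aeval_omega (h : IsSmith u E F H) (p : ℂ[X]) (r : A) :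
    Commute (aeval (2 * F * E + aeval H (u.comp (X + 1))) p) r := by
  induction p using Polynomial.induction_on with
  | C a => rw [aeval_C]; exact Algebra.commutes a r
  | add p q hp hq => rw [map_add]; exact hp.add_left hq
  | monomial n a _ =>
    rw [map_mul, map_pow, aeval_C, aeval_X]
    exact Commute.mul_left (Algebra.commutes a r) ((h.commute_omega r).pow_left _)

/-! ### Whittaker vectors -/

/-- The two-variable evaluation `P(Ω, H)`: the coefficient variable of `ℂ[X][X]` goes to the Casimir
element `Ω`, the outer variable to `H`. -/
noncomputable def eval₂OmegaH (h : IsSmith u E F H) : ℂ[X][X] →+* A :=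
  eval₂RingHom' (aeval (2 * F * E + aeval H (u.comp (X + 1)))).toRingHom H
    fun a => h.commute_aeval_omega a H

theorem eval₂OmegaH_C (h : IsSmith u E F H) (a : ℂ[X]) :
    h.eval₂OmegaH (C a) = aeval (2 * F * E + aeval H (u.comp (X + 1))) a := by
  simp [eval₂OmegaH, eval₂RingHom']

theorem eval₂OmegaH_X (h : IsSmith u E F H) : h.eval₂OmegaH X = H := by
  simp [eval₂OmegaH, eval₂RingHom']

theorem eval₂OmegaH_map_C (h : IsSmith u E F H) (p : ℂ[X]) :
    h.eval₂OmegaH (p.map C) = aeval H p := by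
  induction p using Polynomial.induction_on with
  | C a => rw [map_C, eval₂OmegaH_C, aeval_C, aeval_C]
  | add p q hp hq => rw [Polynomial.map_add, map_add, map_add, hp, hq]
  | monomial n a _ =>
    rw [Polynomial.map_mul, Polynomial.map_pow, map_X, map_C, map_mul, map_pow, eval₂OmegaH_X,
      eval₂OmegaH_C, aeval_C, map_mul, map_pow, aeval_X, aeval_C]

theorem E_eval₂ (h : IsSmith u E F H) (P : ℂ[X][X]) :
    E * h.eval₂OmegaH P = h.eval₂OmegaH (P.comp (X + C (-1))) * E := by
  refine mul_eval₂_shift _ H E (-1) _ (fun a => h.commute_aeval_omega a E) ?_ P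
  rw [map_neg, map_one, add_mul, neg_one_mul, ← sub_eq_add_neg, eq_sub_iff_add_eq,
    ← eq_sub_iff_add_eq']
  exact h.he.symm

theorem F_eval₂ (h : IsSmith u E F H) (P : ℂ[X][X]) :
    F * h.eval₂OmegaH P = h.eval₂OmegaH (P.comp (X + C 1)) * F := by
  refine mul_eval₂_shift _ H F 1 _ (fun a => h.commute_aeval_omega a F) ?_ P
  rw [map_one, add_mul, one_mul, sub_eq_iff_eq_add.1 h.hf]
  abel

variable {V : Type*} [AddCommGroup V] [Module A V]

/-- A Whittaker vector `w` generates `{P(Ω, H) w}`: on `w` one has `2cF = Ω - u(H + 1)`. -/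
theorem exists_eval₂ (h : IsSmith u E F H) {c : ℂ} (hc : c ≠ 0) {w : V}
    (hw : E • w = algebraMap ℂ A c • w) (r : A) :
    ∃ P : ℂ[X][X], r • w = h.eval₂OmegaH P • w := by
  have hCc : ∀ a : ℂ, h.eval₂OmegaH (C (C a)) = algebraMap ℂ A a := fun a => by
    rw [eval₂OmegaH_C, aeval_C]
  have hFw : F • w = h.eval₂OmegaH (C (C (1 / (2 * c))) *
      (C X - (u.comp (X + 1)).map C)) • w := by
    rw [map_mul, hCc, map_sub, eval₂OmegaH_map_C, eval₂OmegaH_C, aeval_X, add_sub_cancel_right,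
      mul_smul, mul_smul, hw, ← mul_smul, ← mul_smul, mul_assoc, ← Algebra.commutes c (2 * F),
      ← mul_assoc, ← mul_assoc, ← map_mul, ← map_ofNat (algebraMap ℂ A) 2, ← map_mul,
      show 1 / (2 * c) * c * 2 = 1 by field_simp, map_one, one_mul]
  -- the set of `x` preserving `{P(Ω, H) w}` is a subalgebra containing the generators
  have key : ∀ x : A, ∀ P : ℂ[X][X], ∃ Q : ℂ[X][X],
      x • h.eval₂OmegaH P • w = h.eval₂OmegaH Q • w := by
    intro x
    have hx : x ∈ Algebra.adjoin ℂ {E, F, H} := h.gen ▸ Algebra.mem_top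
    induction hx using Algebra.adjoin_induction with
    | mem x hx =>
      intro P
      rcases hx with rfl | rfl | rfl
      · exact ⟨P.comp (X + C (-1)) * C (C c), by
          rw [← mul_smul, E_eval₂, mul_smul, hw, ← hCc, ← mul_smul, ← map_mul]⟩
      · exact ⟨_, by rw [← mul_smul, F_eval₂, mul_smul, hFw, ← mul_smul, ← map_mul]⟩
      · exact ⟨X * P, by rw [map_mul, mul_smul, eval₂OmegaH_X]⟩
    | algebraMap a => exact fun P => ⟨C (C a) * P, by rw [map_mul, mul_smul, hCc]⟩
    | add x y _ _ hx hy =>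
      intro P
      obtain ⟨Q, hQ⟩ := hx P
      obtain ⟨R, hR⟩ := hy P
      exact ⟨Q + R, by rw [add_smul, hQ, hR, map_add, add_smul]⟩
    | mul x y _ _ hx hy =>
      intro P
      obtain ⟨Q, hQ⟩ := hy P
      obtain ⟨R, hR⟩ := hx Q
      exact ⟨R, by rw [mul_smul, hQ, hR]⟩
  simpa using key r 1

/-- Every Whittaker vector of a cyclic Whittaker module is a polynomial in the Casimir element
applied to the cyclic vector. -/
theorem whittaker_vector (h : IsSmith u E F H) {c : ℂ} (hc : c ≠ 0) {w : V}
    (hw : E • w = algebraMap ℂ A c • w) (r : A)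
    (hr : E • r • w = algebraMap ℂ A c • r • w) :
    ∃ p : ℂ[X], r • w = aeval (2 * F * E + aeval H (u.comp (X + 1))) p • w := by
  obtain ⟨P, hP⟩ := h.exists_eval₂ hc hw r
  have hcancel : ∀ v : V, algebraMap ℂ A c • v = 0 → v = 0 := by
    intro v hv
    have : algebraMap ℂ A c⁻¹ • algebraMap ℂ A c • v = 0 := by rw [hv, smul_zero]
    rwa [← mul_smul, ← map_mul, inv_mul_cancel₀ hc, map_one, one_smul] at this
  have hEP : ∀ Q : ℂ[X][X], E • h.eval₂OmegaH Q • w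
      = algebraMap ℂ A c • h.eval₂OmegaH (Q.comp (X + C (-1))) • w := by
    intro Q
    rw [← mul_smul, E_eval₂, mul_smul, hw, ← mul_smul, ← mul_smul, Algebra.commutes]
  let J : Ideal ℂ[X][X] :=
    { carrier := {Q | h.eval₂OmegaH Q • w = 0}
      add_mem' := fun {a b} ha hb => by
        simp only [Set.mem_ofPred_eq] at *
        rw [map_add, add_smul, ha, hb, add_zero]
      zero_mem' := by simp
      smul_mem' := fun a b hb => by
        simp only [Set.mem_ofPred_eq, smul_eq_mul] at *
        rw [map_mul, mul_smul, hb, smul_zero] }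
  have hJmem : ∀ Q, Q ∈ J ↔ h.eval₂OmegaH Q • w = 0 := fun Q => Iff.rfl
  have hco := coeff_mem_of_shift_invariant (-1 : ℂ[X]) isUnit_one.neg J
    (fun Q hQ => by
      rw [hJmem] at *
      apply hcancel
      rw [← hEP, hQ, smul_zero]) P.natDegree P le_rfl (by
      rw [hJmem, map_sub, sub_smul]
      apply hcancel
      rw [smul_sub, ← hEP, ← hP, hr, sub_self])
  refine ⟨P.coeff 0, ?_⟩
  rw [hP, ← h.eval₂OmegaH_C, ← sub_eq_zero, ← sub_smul, ← map_sub]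
  have e : P - C (P.coeff 0) = P.divX * X := by
    rw [sub_eq_iff_eq_add]; exact (divX_mul_X_add P).symm
  rw [← hJmem, e, as_sum_range_C_mul_X_pow P.divX, Finset.sum_mul]
  refine J.sum_mem fun i _ => ?_
  rw [coeff_divX, mul_assoc]
  exact J.mul_mem_right _ (hco _ (by omega))

/-! ### Indecomposability and decomposition -/

/-- A cyclic Whittaker module killed by a power of an irreducible polynomial in the Casimir element
is indecomposable. -/
theorem indecomposable (h : IsSmith u E F H) {c : ℂ} (hc : c ≠ 0) {w : V}
    (hw : E • w = algebraMap ℂ A c • w) {g : ℂ[X]} (hg : Irreducible g) (n : ℕ)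
    (hgw : aeval (2 * F * E + aeval H (u.comp (X + 1))) (g ^ n) • w = 0)
    (W₁ W₂ : Submodule A V) (hsup : W₁ ⊔ W₂ = Submodule.span A {w}) (hinf : W₁ ⊓ W₂ = ⊥) :
    W₁ = ⊥ ∨ W₂ = ⊥ := by
  obtain ⟨w₁, h₁, w₂, h₂, hsum⟩ :=
    Submodule.mem_sup.1 (hsup ▸ Submodule.mem_span_singleton_self w)
  -- both components of `w` are again Whittaker vectors
  have hd : E • w₁ - algebraMap ℂ A c • w₁ = -(E • w₂ - algebraMap ℂ A c • w₂) := by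
    rw [← hsum, smul_add, smul_add] at hw
    rw [eq_neg_iff_add_eq_zero, ← sub_eq_zero.2 hw]
    abel
  have hd1 : E • w₁ - algebraMap ℂ A c • w₁ ∈ W₁ :=
    W₁.sub_mem (W₁.smul_mem _ h₁) (W₁.smul_mem _ h₁)
  have hd2 : E • w₂ - algebraMap ℂ A c • w₂ ∈ W₂ :=
    W₂.sub_mem (W₂.smul_mem _ h₂) (W₂.smul_mem _ h₂)
  have hd0 : E • w₁ - algebraMap ℂ A c • w₁ = 0 := by
    have : E • w₁ - algebraMap ℂ A c • w₁ ∈ W₁ ⊓ W₂ := ⟨hd1, hd ▸ W₂.neg_mem hd2⟩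
    rwa [hinf, Submodule.mem_bot] at this
  have hd0' : E • w₂ - algebraMap ℂ A c • w₂ = 0 := by
    rwa [hd, neg_eq_zero] at hd0
  obtain ⟨r₁, hr₁⟩ := Submodule.mem_span_singleton.1 (hsup ▸ Submodule.mem_sup_left h₁)
  obtain ⟨r₂, hr₂⟩ := Submodule.mem_span_singleton.1 (hsup ▸ Submodule.mem_sup_right h₂)
  obtain ⟨p₁, hp₁⟩ := h.whittaker_vector hc hw r₁ (by rw [hr₁]; exact sub_eq_zero.1 hd0)
  obtain ⟨p₂, hp₂⟩ := h.whittaker_vector hc hw r₂ (by rw [hr₂]; exact sub_eq_zero.1 hd0')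
  rw [hr₁] at hp₁
  rw [hr₂] at hp₂
  -- a component given by a polynomial prime to `g` generates everything
  have fin : ∀ W : Submodule A V, ∀ p : ℂ[X], ¬ g ∣ p →
      aeval (2 * F * E + aeval H (u.comp (X + 1))) p • w ∈ W → Submodule.span A {w} ≤ W := by
    intro W p hp hW
    obtain ⟨a, b, hab⟩ := ((hg.coprime_iff_not_dvd.2 hp).pow_left (m := n)).symm
    rw [Submodule.span_singleton_le_iff_mem]
    have : w = aeval (2 * F * E + aeval H (u.comp (X + 1))) a •
        aeval (2 * F * E + aeval H (u.comp (X + 1))) p • w := by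
      have := congrArg (fun q => aeval (2 * F * E + aeval H (u.comp (X + 1))) q • w) hab
      simp only [map_add, map_mul, map_one, one_smul, add_smul, mul_smul, hgw, smul_zero,
        add_zero] at this
      exact this.symm
    rw [this]
    exact W.smul_mem _ hW
  by_cases hp : g ∣ p₁
  · left
    by_cases hp' : g ∣ p₂
    ·
      -- then `p₁ + p₂ - 1` is prime to `g` and kills `w`
      have hnd : ¬ g ∣ p₁ + p₂ - 1 := fun hd =>
        hg.not_isUnit (isUnit_of_dvd_one (by
          have := dvd_sub (dvd_add hp hp') hd
          rwa [sub_sub_cancel] at this))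
      have := fin ⊥ (p₁ + p₂ - 1) hnd (by
        rw [Submodule.mem_bot, map_sub, map_add, map_one, sub_smul, add_smul, one_smul, ← hp₁,
          ← hp₂, hsum, sub_self])
      rw [← hsup] at this
      exact eq_bot_iff.2 (le_sup_left.trans this)
    · have := fin W₂ p₂ hp' (hp₂ ▸ h₂)
      rw [← hsup] at this
      rw [← hinf]
      exact (inf_eq_left.2 (le_sup_left.trans this)).symm
  · right
    have := fin W₁ p₁ hp (hp₁ ▸ h₁)
    rw [← hsup] at this
    rw [← hinf]
    exact (inf_eq_right.2 (le_sup_right.trans this)).symm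

/-- The decomposition over any algebra satisfying the relations of `R(f)`; of the annihilator it is
only used that it contains `∏ gᵢ ^ nᵢ` evaluated at the Casimir element. -/
theorem decomposition (h : IsSmith u E F H) {c : ℂ} (hc : c ≠ 0) {w : V}
    (hw : E • w = algebraMap ℂ A c • w) (hcyc : ∀ v : V, ∃ r : A, v = r • w)
    {m : ℕ} (hm : 1 ≤ m) (g : Fin m → ℂ[X]) (n : Fin m → ℕ) (hg : ∀ i, Irreducible (g i))
    (hcop : ∀ i j, i ≠ j → IsCoprime (g i) (g j))
    (hG : ∀ v : V, aeval (2 * F * E + aeval H (u.comp (X + 1))) (∏ i, g i ^ n i) • v = 0) :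
    ∃ Vi : Fin m → Submodule A V,
      (∀ i, Vi i = Submodule.span A
          {(aeval (2 * F * E + aeval H (u.comp (X + 1)))
            (∏ j ∈ Finset.univ.erase i, g j ^ n j)) • w}) ∧
      iSup Vi = ⊤ ∧
      iSupIndep Vi ∧
      (∀ i, ∀ W₁ W₂ : Submodule A V,
        W₁ ⊔ W₂ = Vi i → W₁ ⊓ W₂ = ⊥ → W₁ = ⊥ ∨ W₂ = ⊥) := by
  have hcomm := h.commute_aeval_omega
  revert hG
  -- `Z p` is the action of the polynomial `p` in the Casimir element
  set Z := aeval (R := ℂ) (2 * F * E + aeval H (u.comp (X + 1))) with hZ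
  intro hG
  have hkill : ∀ i, Z (g i ^ n i) • Z (∏ j ∈ Finset.univ.erase i, g j ^ n j) • w = 0 := by
    intro i
    rw [← mul_smul, ← map_mul, Finset.mul_prod_erase _ (fun j => g j ^ n j) (Finset.mem_univ i)]
    exact hG w
  -- the vectors killed by a fixed polynomial form a submodule
  have hker : ∀ q : ℂ[X], ∃ K : Submodule A V, ∀ v, v ∈ K ↔ Z q • v = 0 := by
    intro q
    refine ⟨{ carrier := {v | Z q • v = 0}
              add_mem' := fun {a b} ha hb => by
                simp only [Set.mem_ofPred_eq] at *
                rw [smul_add, ha, hb, add_zero]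
              zero_mem' := by simp
              smul_mem' := fun r v hv => by
                simp only [Set.mem_ofPred_eq] at *
                rw [← mul_smul, (hcomm q r).eq, mul_smul, hv, smul_zero] }, fun v => Iff.rfl⟩
  refine ⟨fun i => Submodule.span A {Z (∏ j ∈ Finset.univ.erase i, g j ^ n j) • w},
    fun i => rfl, ?_, ?_, ?_⟩
  · have : Nonempty (Fin m) := ⟨⟨0, hm⟩⟩
    obtain ⟨μ, hμ⟩ := exists_sum_eq_one_iff_pairwise_coprime'.2
      (show Pairwise (Function.onFun IsCoprime fun i => g i ^ n i) from
        fun i j hij => (hcop i j hij).pow)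
    have hwm : w = ∑ i, Z (μ i) • Z (∏ j ∈ Finset.univ.erase i, g j ^ n j) • w := by
      have := congrArg (fun q => Z q • w) hμ
      simp only [map_sum, map_mul, map_one, one_smul, Finset.sum_smul, mul_smul] at this
      refine this.symm.trans ?_
      refine Finset.sum_congr rfl fun i _ => ?_
      rw [Finset.compl_eq_univ_sdiff, Finset.sdiff_singleton_eq_erase]
    rw [eq_top_iff]
    rintro v -
    obtain ⟨r, rfl⟩ := hcyc v
    refine Submodule.smul_mem _ _ ?_
    refine (congrArg (· ∈ _) hwm).mpr ?_
    refine Submodule.sum_mem _ fun i _ => Submodule.smul_mem _ _ ?_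
    exact Submodule.mem_iSup_of_mem i (Submodule.mem_span_singleton_self _)
  · intro i
    rw [Submodule.disjoint_def]
    intro x hx hx'
    obtain ⟨K, hK⟩ := hker (g i ^ n i)
    obtain ⟨L, hL⟩ := hker (∏ j ∈ Finset.univ.erase i, g j ^ n j)
    have h1 : Z (g i ^ n i) • x = 0 := by
      rw [← hK]
      refine (Submodule.span_singleton_le_iff_mem _ _).2 ?_ hx
      rw [hK]
      exact hkill i
    have h2 : Z (∏ j ∈ Finset.univ.erase i, g j ^ n j) • x = 0 := by
      rw [← hL]
      refine (iSup₂_le fun j hj => ?_ : _ ≤ L) hx'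
      rw [Submodule.span_singleton_le_iff_mem, hL]
      -- the complementary product at `i` contains the factor `g j ^ n j`
      rw [← Finset.prod_erase_mul _ _ (Finset.mem_erase.2 ⟨hj, Finset.mem_univ j⟩), map_mul,
        mul_smul, hkill, smul_zero]
    have hco : IsCoprime (g i ^ n i) (∏ j ∈ Finset.univ.erase i, g j ^ n j) :=
      IsCoprime.prod_right fun j hj => (hcop i j (Finset.ne_of_mem_erase hj).symm).pow
    obtain ⟨a, b, hab⟩ := hco
    have := congrArg (fun q => Z q • x) hab
    simp only [map_add, map_mul, map_one, one_smul, add_smul, mul_smul, h1, smul_zero,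
      h2, add_zero] at this
    exact this.symm
  · intro i W₁ W₂ hsup hinf
    refine h.indecomposable hc ?_ (hg i) (n i) (hkill i) W₁ W₂ hsup hinf
    rw [← mul_smul, ← (hcomm _ E).eq, mul_smul, hw, ← mul_smul, ← mul_smul, Algebra.commutes]

end IsSmith

theorem isSmith_smithAlgebra (f u : ℂ[X]) (hu : f = C (1/2 : ℂ) * (u.comp (X + 1) - u)) :
    IsSmith u (SmithE f) (SmithF f) (SmithH f) where
  ef := by
    have h2 : (C 2 : ℂ[X]) * f = u.comp (X + 1) - u := by
      rw [hu, ← mul_assoc, ← C_mul]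
      norm_num
    rw [smith_ef, ← map_sub, ← h2, map_mul, aeval_C, map_ofNat]
  he := smith_he f
  hf := smith_hf f
  gen := smith_adjoin f

/-- Let `(V, w)` be a Whittaker module with nonzero central annihilator
`Z_V = ⟨∏ gᵢ^{nᵢ}⟩`, a product of powers of pairwise coprime irreducible polynomials in
`ℂ[Ω]`.  Then `V = V₁ ⊕ ⋯ ⊕ Vₘ` with `Vᵢ = R·(∏_{j≠i} gⱼ^{nⱼ})·w` indecomposable
submodules. -/
theorem smith_whittaker_decomposition (f u : ℂ[X])
    (hu : f = C (1/2 : ℂ) * (u.comp (X + 1) - u)) (c : ℂ) (hc : c ≠ 0)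
    (V : Type) [AddCommGroup V] [Module (SmithAlgebra f) V] (w : V)
    (hw : SmithE f • w = algebraMap ℂ (SmithAlgebra f) c • w)
    (hcyc : ∀ v : V, ∃ r : SmithAlgebra f, v = r • w)
    (m : ℕ) (hm : 1 ≤ m) (g : Fin m → ℂ[X]) (n : Fin m → ℕ)
    (hg : ∀ i, Irreducible (g i)) (hn : ∀ i, 1 ≤ n i)
    (hcop : ∀ i j, i ≠ j → IsCoprime (g i) (g j))
    (hZV : {z : SmithAlgebra f | z ∈ Subalgebra.center ℂ (SmithAlgebra f) ∧ ∀ v : V, z • v = 0}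
        = {z : SmithAlgebra f |
            ∃ p : ℂ[X], z = aeval (SmithOmega f u) ((∏ i, g i ^ n i) * p)}) :
    ∃ Vi : Fin m → Submodule (SmithAlgebra f) V,
      (∀ i, Vi i = Submodule.span (SmithAlgebra f)
          {(aeval (SmithOmega f u) (∏ j ∈ Finset.univ.erase i, g j ^ n j)) • w}) ∧
      iSup Vi = ⊤ ∧
      iSupIndep Vi ∧
      (∀ i, ∀ W₁ W₂ : Submodule (SmithAlgebra f) V,
        W₁ ⊔ W₂ = Vi i → W₁ ⊓ W₂ = ⊥ → W₁ = ⊥ ∨ W₂ = ⊥) := by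
  have hG : aeval (SmithOmega f u) (∏ i, g i ^ n i) ∈ {z : SmithAlgebra f |
      z ∈ Subalgebra.center ℂ (SmithAlgebra f) ∧ ∀ v : V, z • v = 0} := by
    rw [hZV]
    exact ⟨1, by rw [mul_one]⟩
  exact (isSmith_smithAlgebra f u hu).decomposition hc hw hcyc hm g n hg hcop hG.2
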